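/- Let p ≥ 2 be an integer and let w ∈ X^ℕ be any infinite word over X = {0,1,…,p}. Let H = ℓ²(Orb(w); ℂ) and let T : H → H be the bounded linear operator (the adjacency operator of the orbital Schreier graph Γ_w) defined by (Tf)(v) = Σ_{i=1}^p ( f(E_i(v)) + f(E_i^{-1}(v)) ) for v ∈ Orb(w). Then T is self-adjoint and its spectrum, as a subset of ℝ, equals the closure of ⋃_{n≥0} {λ ∈ ℝ : f_p^{∘n}(λ) = 2(p−1)}, where f_p(λ) = λ² − 2(p−1)λ − 2p and f_p^{∘n} is its n-fold iterate. -/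

import Mathlib

open scoped Classical

/-- The action of the generator `e_i` of the star automaton group `𝒢_{S_p}` on the
boundary of the rooted `(p+1)`-ary tree, i.e. on infinite words over `X = {0,…,p}`:
`E_i(0^∞) = i^∞`; `E_i(0^k i u) = i^k 0 u`; `E_i(0^k j u) = i^k j u` for `j ∉ {0, i}`. -/
noncomputable def Ebd (p : ℕ) (i : Fin (p + 1)) (w : ℕ → Fin (p + 1)) : ℕ → Fin (p + 1) := by
  classical
  exact
    if h : ∃ k, w k ≠ 0 then
      if w (Nat.find h) = i then
        fun m => if m < Nat.find h then i else if m = Nat.find h then 0 else w m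
      else fun m => if m < Nat.find h then i else w m
    else fun _ => i

/-- One step of the action of the generators `E_1, …, E_p` (or their inverses). -/
def StarStep (p : ℕ) (u v : ℕ → Fin (p + 1)) : Prop :=
  ∃ i : Fin p, Ebd p i.succ u = v ∨ Ebd p i.succ v = u

/-- The orbit `Orb(w)` of `w` under the group generated by `E_1, …, E_p`. -/
def StarOrbit (p : ℕ) (w : ℕ → Fin (p + 1)) : Set (ℕ → Fin (p + 1)) :=
  {v | Relation.ReflTransGen (StarStep p) w v}

/-- Two infinite words are cofinal if they differ in only finitely many positions. -/
def Cofinal {p : ℕ} (u v : ℕ → Fin (p + 1)) : Prop :=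
  {j : ℕ | u j ≠ v j}.Finite

/-- The quadratic map `f_p(λ) = λ² − 2(p−1)λ − 2p`. -/
noncomputable def fp (p : ℕ) : ℝ → ℝ := fun x => x ^ 2 - 2 * ((p : ℝ) - 1) * x - 2 * p

section PartialComposition

variable {α β : Type*}

lemma sum_elim_norm_rpow_le (ψ : α → Option β)
    (hψ : ∀ a a' b, b ∈ ψ a → b ∈ ψ a' → a = a') (f : lp (fun _ : β => ℂ) 2) (s : Finset α) :
    ∑ a ∈ s, ‖(ψ a).elim 0 f‖ ^ (2 : ENNReal).toReal ≤ ‖f‖ ^ (2 : ENNReal).toReal := by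
  have h2 : (2 : ENNReal).toReal = 2 := by norm_num
  refine le_trans (le_of_eq ?_)
    (lp.sum_rpow_le_norm_rpow (by norm_num) f (s.filterMap ψ hψ))
  induction s using Finset.induction_on with
  | empty => simp
  | insert a s ha ih =>
    rw [Finset.sum_insert ha, ih]
    cases hb : ψ a with
    | none =>
      have : (insert a s).filterMap ψ hψ = s.filterMap ψ hψ := by
        ext b
        simp [hb]
      rw [this]
      simp
    | some b =>
      have : (insert a s).filterMap ψ hψ = insert b (s.filterMap ψ hψ) := by
        ext b'
        simp [hb, eq_comm]
      rw [this, Finset.sum_insert]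
      · simp
      · rw [Finset.mem_filterMap]
        rintro ⟨a', ha', hb'⟩
        exact ha (hψ a a' b hb hb' ▸ ha')

/-- Composition with a partial injection `ψ`, extended by zero where `ψ` is undefined, as an
operator between `ℓ²` spaces. -/
noncomputable def partialComp (ψ : α → Option β)
    (hψ : ∀ a a' b, b ∈ ψ a → b ∈ ψ a' → a = a') :
    lp (fun _ : β => ℂ) 2 →L[ℂ] lp (fun _ : α => ℂ) 2 :=
  LinearMap.mkContinuous
    { toFun := fun f => ⟨fun a => (ψ a).elim 0 f, memℓp_gen' (sum_elim_norm_rpow_le ψ hψ f)⟩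
      map_add' := fun f g => by
        ext a
        change (ψ a).elim 0 (f + g) = (ψ a).elim 0 f + (ψ a).elim 0 g
        cases ψ a
        · exact (add_zero (0 : ℂ)).symm
        · rfl
      map_smul' := fun c f => by
        ext a
        cases h : ψ a <;> simp [h] }
    1 (fun f => by
      rw [one_mul]
      exact lp.norm_le_of_forall_sum_le (by norm_num) (norm_nonneg f)
        (sum_elim_norm_rpow_le ψ hψ f))

variable (ψ : α → Option β) (hψ : ∀ a a' b, b ∈ ψ a → b ∈ ψ a' → a = a')

lemma partialComp_apply (f : lp (fun _ : β => ℂ) 2) (a : α) :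
    partialComp ψ hψ f a = (ψ a).elim 0 f := rfl

lemma norm_partialComp_le : ‖partialComp ψ hψ‖ ≤ 1 :=
  LinearMap.mkContinuous_norm_le _ zero_le_one _

/-- The restriction operator `f ↦ f ∘ φ` for an injective map `φ`. -/
noncomputable def restrictOp (φ : α → β) (hφ : φ.Injective) :
    lp (fun _ : β => ℂ) 2 →L[ℂ] lp (fun _ : α => ℂ) 2 :=
  partialComp (fun a => some (φ a)) fun _ _ _ h h' =>
    hφ ((Option.mem_some_iff.1 h).trans (Option.mem_some_iff.1 h').symm)

lemma restrictOp_apply (φ : α → β) (hφ : φ.Injective) (f : lp (fun _ : β => ℂ) 2) (a : α) :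
    restrictOp φ hφ f a = f (φ a) := rfl

lemma norm_restrictOp_le (φ : α → β) (hφ : φ.Injective) : ‖restrictOp φ hφ‖ ≤ 1 :=
  norm_partialComp_le _ _

/-- Extension by zero along an injective map `φ`. -/
noncomputable def extendOp (φ : α → β) (hφ : φ.Injective) :
    lp (fun _ : α => ℂ) 2 →L[ℂ] lp (fun _ : β => ℂ) 2 :=
  partialComp (Function.partialInv φ) fun _ _ _ h h' =>
    ((hφ.isPartialInv _ _).1 h).symm.trans
      ((hφ.isPartialInv _ _).1 h')

lemma extendOp_apply (φ : α → β) (hφ : φ.Injective) (f : lp (fun _ : α => ℂ) 2) (a : α) :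
    extendOp φ hφ f (φ a) = f a := by
  have : Function.partialInv φ (φ a) = some a := (hφ.isPartialInv _ _).2 rfl
  rw [extendOp, partialComp_apply, this, Option.elim_some]

lemma extendOp_apply_of_notMem_range (φ : α → β) (hφ : φ.Injective) (f : lp (fun _ : α => ℂ) 2)
    {b : β} (hb : b ∉ Set.range φ) : extendOp φ hφ f b = 0 := by
  have : Function.partialInv φ b = none := by
    refine Option.eq_none_iff_forall_not_mem.2 fun a ha => hb ⟨a, ?_⟩
    exact (hφ.isPartialInv _ _).1 ha
  rw [extendOp, partialComp_apply, this, Option.elim_none]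

lemma inner_restrictOp_perm (σ : Equiv.Perm α) (f g : lp (fun _ : α => ℂ) 2) :
    inner ℂ (restrictOp σ σ.injective f) g = inner ℂ f (restrictOp σ.symm σ.symm.injective g) := by
  rw [lp.inner_eq_tsum, lp.inner_eq_tsum, ← Equiv.tsum_eq σ.symm]
  simp [restrictOp_apply]

end PartialComposition

section SchurComplement

variable {K H : Type*} [NormedAddCommGroup K] [NormedSpace ℂ K] [NormedAddCommGroup H]
  [NormedSpace ℂ H]

lemma notMem_spectrum_iff_exists_inverse {E : Type*} [NormedAddCommGroup E] [NormedSpace ℂ E]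
    (z : ℂ) (A : E →L[ℂ] E) :
    z ∉ spectrum ℂ A ↔ ∃ R : E →L[ℂ] E,
      (∀ f, z • R f - A (R f) = f) ∧ ∀ f, z • R f - R (A f) = f := by
  rw [spectrum.mem_iff, not_not, isUnit_iff_exists]
  refine exists_congr fun R => and_congr ?_ ?_
  · rw [ContinuousLinearMap.ext_iff]
    refine forall_congr' fun f => ?_
    rw [Algebra.algebraMap_eq_smul_one]
    rfl
  · rw [ContinuousLinearMap.ext_iff]
    refine forall_congr' fun f => ?_
    rw [Algebra.algebraMap_eq_smul_one, ← map_smul, ← map_sub]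
    rfl

/-- The Schur complement criterion: `P`, `J` exhibit `K` as a complemented subspace of `H`, the
compression of `T` to `K` is zero and its compression to the complement is the scalar `c`. -/
lemma mem_spectrum_iff_of_compression (P : H →L[ℂ] K) (J : K →L[ℂ] H) (T : H →L[ℂ] H)
    (S : K →L[ℂ] K) (c q : ℂ) (hPJ : ∀ g, P (J g) = g) (hPTJ : ∀ g, P (T (J g)) = 0)
    (hN : ∀ f, P f = 0 → T f = c • f + J (P (T f)))
    (hS : ∀ g, P (T (T (J g))) = S g + q • g) {lam : ℂ} (hlam : lam ≠ c) :
    lam ∈ spectrum ℂ T ↔ lam ^ 2 - c * lam - q ∈ spectrum ℂ S := by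
  have hd : c - lam ≠ 0 := sub_ne_zero.2 hlam.symm
  set d := c - lam with hd_def
  set mu := lam ^ 2 - c * lam - q with hmu
  have hdec : ∀ f, T f = T (J (P f)) + c • (f - J (P f)) + J (P (T f)) := fun f => by
    have h := hN (f - J (P f)) (by rw [map_sub, hPJ, sub_self])
    rw [map_sub, map_sub, hPTJ, sub_zero] at h
    rw [add_assoc, ← h, add_sub_cancel]
  have hTTJ : ∀ g, T (T (J g)) = c • T (J g) + J (S g + q • g) := fun g => by
    rw [hN _ (hPTJ g), hS]
  have hPTT : ∀ f, P (T (T f)) = S (P f) + q • P f + c • P (T f) := fun f => by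
    conv_lhs => rw [hdec f]
    simp only [map_add, map_sub, map_smul, hS, hPTJ, add_zero, sub_zero]
  rw [← not_iff_not, notMem_spectrum_iff_exists_inverse, notMem_spectrum_iff_exists_inverse]
  constructor
  · rintro ⟨R, hR, hR'⟩
    have hTR : ∀ f, T (R f) = lam • R f - f := fun f => by
      rw [eq_sub_iff_add_eq', ← eq_sub_iff_add_eq, hR]
    have hRT : ∀ f, R (T f) = lam • R f - f := fun f => by
      rw [eq_sub_iff_add_eq', ← eq_sub_iff_add_eq, hR']
    refine ⟨-(d⁻¹ • (P ∘L R ∘L J)), fun f => ?_, fun f => ?_⟩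
    · have h := hPTT (R (J f))
      simp only [hTR, map_sub, map_smul, hPTJ, hPJ] at h
      have h' : S (P (R (J f))) = mu • P (R (J f)) + d • f := by
        simp only [hmu, hd_def]
        linear_combination (norm := module) (-1 : ℂ) • h
      simp only [neg_apply, smul_apply,
        ContinuousLinearMap.comp_apply, map_neg, map_smul, h']
      simp only [smul_add, smul_smul, inv_mul_cancel₀ hd]
      module
    · have h := congrArg P (congrArg R (hTTJ f))
      simp only [hRT, map_sub, map_add, map_smul, hPTJ, hPJ] at h
      have h' : P (R (J (S f))) = mu • P (R (J f)) + d • f := by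
        simp only [hmu, hd_def]
        linear_combination (norm := module) (-1 : ℂ) • h
      simp only [neg_apply, smul_apply,
        ContinuousLinearMap.comp_apply, h']
      simp only [smul_add, smul_smul, inv_mul_cancel₀ hd]
      module
  · rintro ⟨R, hR, hR'⟩
    have hSR : ∀ f, S (R f) = mu • R f - f := fun f => by
      rw [eq_sub_iff_add_eq', ← eq_sub_iff_add_eq, hR]
    have hRS : ∀ f, R (S f) = mu • R f - f := fun f => by
      rw [eq_sub_iff_add_eq', ← eq_sub_iff_add_eq, hR']
    refine ⟨-(d⁻¹ • ((d • J - T ∘L J) ∘L R ∘L (d • P - P ∘L T) + (1 - J ∘L P))),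
      fun f => ?_, fun f => ?_⟩
    · have h := hdec f
      refine smul_right_injective _ hd ?_
      simp only [neg_apply, smul_apply,
        ContinuousLinearMap.comp_apply, add_apply,
        sub_apply, one_apply_eq_self, map_neg, map_smul, map_add,
        map_sub, hTTJ, hSR]
      simp only [smul_sub, smul_neg, smul_comm d lam, smul_inv_smul₀ hd]
      simp only [hmu, hd_def]
      linear_combination (norm := module) h
    · have h := hdec f
      refine smul_right_injective _ hd ?_
      simp only [neg_apply, smul_apply,
        ContinuousLinearMap.comp_apply, add_apply,
        sub_apply, one_apply_eq_self, map_smul, map_add,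
        map_sub, hPTT, hRS]
      simp only [smul_sub, smul_neg, smul_comm d lam, smul_inv_smul₀ hd]
      simp only [hmu, hd_def]
      linear_combination (norm := module) h

end SchurComplement

section Words

variable {p : ℕ}

/-- The word `j u`. -/
def consWord (j : Fin (p + 1)) (u : ℕ → Fin (p + 1)) : ℕ → Fin (p + 1)
  | 0 => j
  | n + 1 => u n

/-- The word obtained by deleting the first letter. -/
def tailWord (u : ℕ → Fin (p + 1)) : ℕ → Fin (p + 1) := fun n => u (n + 1)

lemma consWord_tailWord (u : ℕ → Fin (p + 1)) : consWord (u 0) (tailWord u) = u := by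
  ext n
  cases n <;> rfl

lemma consWord_injective (j : Fin (p + 1)) : (consWord j).Injective := fun u v h => by
  ext n
  exact congrArg Fin.val (congrFun h (n + 1))

lemma Ebd_consWord_zero (i : Fin (p + 1)) (u : ℕ → Fin (p + 1)) :
    Ebd p i (consWord 0 u) = consWord i (Ebd p i u) := by
  by_cases h : ∃ k, u k ≠ 0
  · have h' : ∃ k, consWord 0 u k ≠ 0 := h.imp' (· + 1) fun _ hk => hk
    have hfind : Nat.find h' = Nat.find h + 1 := by
      rw [Nat.find_eq_iff]
      refine ⟨Nat.find_spec h, fun n hn => ?_⟩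
      cases n with
      | zero => exact not_not.2 rfl
      | succ n => exact Nat.find_min h (by omega)
    have hletter : consWord 0 u (Nat.find h + 1) = u (Nat.find h) := rfl
    simp only [Ebd, dif_pos h, dif_pos h', hfind, hletter]
    ext n
    split_ifs <;> cases n <;> simp [consWord]
  · have h' : ¬ ∃ k, consWord 0 u k ≠ 0 := by
      rintro ⟨k, hk⟩
      cases k with
      | zero => exact hk rfl
      | succ k => exact h ⟨k, hk⟩
    simp only [Ebd, dif_neg h, dif_neg h']
    ext n
    cases n <;> rfl

lemma Ebd_consWord_of_ne_zero (i : Fin (p + 1)) {j : Fin (p + 1)} (hj : j ≠ 0)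
    (u : ℕ → Fin (p + 1)) :
    Ebd p i (consWord j u) = consWord (if j = i then 0 else j) u := by
  have h' : ∃ k, consWord j u k ≠ 0 := ⟨0, hj⟩
  have hfind : Nat.find h' = 0 := (Nat.find_eq_zero h').2 hj
  have hletter : consWord j u 0 = j := rfl
  simp only [Ebd, dif_pos h', hfind, hletter]
  ext n
  split_ifs <;> cases n <;> simp [consWord]

lemma Ebd_consWord_self {i : Fin (p + 1)} (hi : i ≠ 0) (u : ℕ → Fin (p + 1)) :
    Ebd p i (consWord i u) = consWord 0 u := by
  rw [Ebd_consWord_of_ne_zero i hi, if_pos rfl]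

/-- The inverse of `Ebd p i`, which is its conjugate by the exchange of the letters `0`, `i`. -/
noncomputable def EbdInv (i : Fin (p + 1)) (w : ℕ → Fin (p + 1)) : ℕ → Fin (p + 1) :=
  fun n => Equiv.swap 0 i (Ebd p i (fun m => Equiv.swap 0 i (w m)) n)

lemma comp_consWord (s : Fin (p + 1) → Fin (p + 1)) (j : Fin (p + 1)) (u : ℕ → Fin (p + 1)) :
    (fun n => s (consWord j u n)) = consWord (s j) (fun n => s (u n)) := by
  ext n
  cases n <;> rfl

lemma EbdInv_consWord_self {i : Fin (p + 1)} (u : ℕ → Fin (p + 1)) :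
    EbdInv i (consWord i u) = consWord 0 (EbdInv i u) := by
  unfold EbdInv
  rw [comp_consWord (Equiv.swap 0 i), Equiv.swap_apply_right, Ebd_consWord_zero,
    comp_consWord (Equiv.swap 0 i), Equiv.swap_apply_right]

lemma EbdInv_consWord_of_ne {i j : Fin (p + 1)} (hj : j ≠ i)
    (u : ℕ → Fin (p + 1)) :
    EbdInv i (consWord j u) = consWord (if j = 0 then i else j) u := by
  have hj' : Equiv.swap 0 i j ≠ 0 := by
    rw [Ne, Equiv.swap_apply_eq_iff, Equiv.swap_apply_left]
    exact hj
  unfold EbdInv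
  rw [comp_consWord (Equiv.swap 0 i), Ebd_consWord_of_ne_zero i hj',
    comp_consWord (Equiv.swap 0 i)]
  simp only [Equiv.swap_apply_self]
  congr 1
  by_cases h0 : j = 0
  · simp [h0]
  · rw [Equiv.swap_apply_of_ne_of_ne h0 hj, if_neg hj, if_neg h0,
      Equiv.swap_apply_of_ne_of_ne h0 hj]

lemma Ebd_EbdInv {i : Fin (p + 1)} (hi : i ≠ 0) (u : ℕ → Fin (p + 1)) :
    Ebd p i (EbdInv i u) = u := by
  funext n
  induction n generalizing u with
  | zero =>
    rw [← consWord_tailWord u]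
    by_cases h : u 0 = i
    · rw [h, EbdInv_consWord_self, Ebd_consWord_zero]
      rfl
    · rw [EbdInv_consWord_of_ne h]
      by_cases h0 : u 0 = 0
      · rw [if_pos h0, Ebd_consWord_self hi, h0]
      · rw [if_neg h0, Ebd_consWord_of_ne_zero i h0, if_neg h]
  | succ n ih =>
    rw [← consWord_tailWord u]
    by_cases h : u 0 = i
    · rw [h, EbdInv_consWord_self, Ebd_consWord_zero]
      exact ih _
    · rw [EbdInv_consWord_of_ne h]
      by_cases h0 : u 0 = 0
      · rw [if_pos h0, Ebd_consWord_self hi, h0]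
      · rw [if_neg h0, Ebd_consWord_of_ne_zero i h0, if_neg h]

lemma EbdInv_Ebd {i : Fin (p + 1)} (hi : i ≠ 0) (u : ℕ → Fin (p + 1)) :
    EbdInv i (Ebd p i u) = u := by
  have h := Ebd_EbdInv hi (fun n => Equiv.swap 0 i (u n))
  have hs : (fun n => Equiv.swap 0 i (EbdInv i (fun n => Equiv.swap 0 i (u n)) n)) = Ebd p i u := by
    simp [EbdInv]
  rw [← hs]
  unfold EbdInv at h ⊢
  simp only [Equiv.swap_apply_self] at h ⊢
  rw [h]
  simp

lemma StarStep.symm {u v : ℕ → Fin (p + 1)} (h : StarStep p u v) : StarStep p v u :=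
  h.imp fun _ => Or.symm

lemma starStep_consWord_zero (j : Fin (p + 1)) (u : ℕ → Fin (p + 1)) :
    Relation.ReflTransGen (StarStep p) (consWord 0 u) (consWord j u) := by
  cases j using Fin.cases with
  | zero => exact .refl
  | succ i => exact .single ⟨i, .inr (Ebd_consWord_self i.succ_ne_zero u)⟩

lemma reflTransGen_starStep_symm {u v : ℕ → Fin (p + 1)}
    (h : Relation.ReflTransGen (StarStep p) u v) : Relation.ReflTransGen (StarStep p) v u :=
  have : Std.Symm (StarStep p) := ⟨fun _ _ => StarStep.symm⟩
  Relation.ReflTransGen.stdSymm.symm _ _ h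

lemma reflTransGen_consWord_of_Ebd (i : Fin p) (u : ℕ → Fin (p + 1)) :
    Relation.ReflTransGen (StarStep p) (consWord 0 u) (consWord 0 (Ebd p i.succ u)) :=
  (Relation.ReflTransGen.single ⟨i, .inl (Ebd_consWord_zero i.succ u)⟩).trans
    (reflTransGen_starStep_symm (starStep_consWord_zero i.succ _))

lemma reflTransGen_consWord {u v : ℕ → Fin (p + 1)}
    (h : Relation.ReflTransGen (StarStep p) u v) (j k : Fin (p + 1)) :
    Relation.ReflTransGen (StarStep p) (consWord j u) (consWord k v) := by
  refine (reflTransGen_starStep_symm (starStep_consWord_zero j u)).trans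
    (.trans ?_ (starStep_consWord_zero k v))
  induction h with
  | refl => exact .refl
  | tail _ h ih =>
    refine ih.trans ?_
    obtain ⟨i, rfl | rfl⟩ := h
    · exact reflTransGen_consWord_of_Ebd i _
    · exact reflTransGen_starStep_symm (reflTransGen_consWord_of_Ebd i _)

lemma reflTransGen_tailWord_Ebd (i : Fin p) (u : ℕ → Fin (p + 1)) :
    Relation.ReflTransGen (StarStep p) (tailWord u) (tailWord (Ebd p i.succ u)) := by
  rw [← consWord_tailWord u]
  by_cases h0 : u 0 = 0
  · rw [h0, Ebd_consWord_zero]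
    exact .single ⟨i, .inl rfl⟩
  · rw [Ebd_consWord_of_ne_zero _ h0]
    exact .refl

lemma reflTransGen_tailWord {u v : ℕ → Fin (p + 1)}
    (h : Relation.ReflTransGen (StarStep p) u v) :
    Relation.ReflTransGen (StarStep p) (tailWord u) (tailWord v) := by
  induction h with
  | refl => exact .refl
  | tail _ h ih =>
    refine ih.trans ?_
    obtain ⟨i, rfl | rfl⟩ := h
    · exact reflTransGen_tailWord_Ebd i _
    · exact reflTransGen_starStep_symm (reflTransGen_tailWord_Ebd i _)

end Words

section Orbit

variable {p : ℕ} (w : ℕ → Fin (p + 1))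

/-- The generator `E_{i+1}` as a permutation of the orbit of `w`. -/
noncomputable def orbitPerm (i : Fin p) : Equiv.Perm (StarOrbit p w) where
  toFun u := ⟨Ebd p i.succ u, u.2.tail ⟨i, .inl rfl⟩⟩
  invFun u := ⟨EbdInv i.succ u, u.2.tail ⟨i, .inr (Ebd_EbdInv i.succ_ne_zero _)⟩⟩
  left_inv _ := Subtype.ext (EbdInv_Ebd i.succ_ne_zero _)
  right_inv _ := Subtype.ext (Ebd_EbdInv i.succ_ne_zero _)

lemma coe_orbitPerm (i : Fin p) (u : StarOrbit p w) :
    (orbitPerm w i u : ℕ → Fin (p + 1)) = Ebd p i.succ u := rfl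

/-- Prepending a letter, as a map between orbits. -/
def orbitCons (j : Fin (p + 1)) (u : StarOrbit p (tailWord w)) : StarOrbit p w :=
  ⟨consWord j u, by
    have h := reflTransGen_consWord u.2 (w 0) j
    rwa [consWord_tailWord] at h⟩

lemma orbitCons_injective (j : Fin (p + 1)) : (orbitCons w j).Injective := fun _ _ h =>
  Subtype.ext (consWord_injective j (congrArg Subtype.val h))

lemma orbitCons_inj {j k : Fin (p + 1)} {u v : StarOrbit p (tailWord w)} :
    orbitCons w j u = orbitCons w k v ↔ j = k ∧ u = v := by
  refine ⟨fun h => ?_, fun ⟨h, h'⟩ => h ▸ h' ▸ rfl⟩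
  have hjk : j = k := congrFun (congrArg Subtype.val h) 0
  subst hjk
  exact ⟨rfl, orbitCons_injective w j h⟩

lemma exists_orbitCons (u : StarOrbit p w) : ∃ j v, orbitCons w j v = u :=
  ⟨(u : ℕ → Fin (p + 1)) 0, ⟨tailWord u, reflTransGen_tailWord u.2⟩,
    Subtype.ext (consWord_tailWord _)⟩

lemma orbitPerm_orbitCons_zero (i : Fin p) (u : StarOrbit p (tailWord w)) :
    orbitPerm w i (orbitCons w 0 u) = orbitCons w i.succ (orbitPerm (tailWord w) i u) :=
  Subtype.ext (Ebd_consWord_zero _ _)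

lemma orbitPerm_orbitCons_self (i : Fin p) (u : StarOrbit p (tailWord w)) :
    orbitPerm w i (orbitCons w i.succ u) = orbitCons w 0 u :=
  Subtype.ext (Ebd_consWord_self i.succ_ne_zero _)

lemma orbitPerm_orbitCons_of_ne {i j : Fin p} (h : j ≠ i) (u : StarOrbit p (tailWord w)) :
    orbitPerm w i (orbitCons w j.succ u) = orbitCons w j.succ u := by
  refine Subtype.ext ((Ebd_consWord_of_ne_zero _ j.succ_ne_zero _).trans ?_)
  rw [if_neg (by simpa using h)]
  rfl

lemma orbitPerm_symm_orbitCons_zero (i : Fin p) (u : StarOrbit p (tailWord w)) :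
    (orbitPerm w i).symm (orbitCons w 0 u) = orbitCons w i.succ u := by
  rw [Equiv.symm_apply_eq, orbitPerm_orbitCons_self]

lemma orbitPerm_symm_orbitCons_self (i : Fin p) (u : StarOrbit p (tailWord w)) :
    (orbitPerm w i).symm (orbitCons w i.succ u) =
      orbitCons w 0 ((orbitPerm (tailWord w) i).symm u) := by
  rw [Equiv.symm_apply_eq, orbitPerm_orbitCons_zero, Equiv.apply_symm_apply]

lemma orbitPerm_symm_orbitCons_of_ne {i j : Fin p} (h : j ≠ i) (u : StarOrbit p (tailWord w)) :
    (orbitPerm w i).symm (orbitCons w j.succ u) = orbitCons w j.succ u := by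
  rw [Equiv.symm_apply_eq, orbitPerm_orbitCons_of_ne w h]

/-- The adjacency operator of the orbital Schreier graph of `w`. -/
noncomputable def adjOp :
    lp (fun _ : StarOrbit p w => ℂ) 2 →L[ℂ] lp (fun _ : StarOrbit p w => ℂ) 2 :=
  ∑ i : Fin p, (restrictOp (orbitPerm w i) (orbitPerm w i).injective +
    restrictOp (orbitPerm w i).symm (orbitPerm w i).symm.injective)

variable (f : lp (fun _ : StarOrbit p w => ℂ) 2)

lemma adjOp_apply (u : StarOrbit p w) :
    adjOp w f u = ∑ i : Fin p, (f (orbitPerm w i u) + f ((orbitPerm w i).symm u)) := by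
  rw [adjOp, sum_apply, lp.coeFn_sum, Finset.sum_apply]
  rfl

lemma adjOp_apply_orbitCons_zero (u : StarOrbit p (tailWord w)) :
    adjOp w f (orbitCons w 0 u) = ∑ i : Fin p,
      (f (orbitCons w i.succ (orbitPerm (tailWord w) i u)) + f (orbitCons w i.succ u)) := by
  simp only [adjOp_apply, orbitPerm_orbitCons_zero, orbitPerm_symm_orbitCons_zero]

lemma adjOp_apply_orbitCons_succ (i : Fin p) (u : StarOrbit p (tailWord w)) :
    adjOp w f (orbitCons w i.succ u) =
      f (orbitCons w 0 u) + f (orbitCons w 0 ((orbitPerm (tailWord w) i).symm u)) +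
        2 * ((p : ℂ) - 1) * f (orbitCons w i.succ u) := by
  rw [adjOp_apply]
  have h : ∀ j : Fin p, f (orbitPerm w j (orbitCons w i.succ u)) +
      f ((orbitPerm w j).symm (orbitCons w i.succ u)) = 2 * f (orbitCons w i.succ u) +
        if j = i then f (orbitCons w 0 u) +
          f (orbitCons w 0 ((orbitPerm (tailWord w) i).symm u)) -
            2 * f (orbitCons w i.succ u) else 0 := fun j => by
    split_ifs with hj
    · rw [hj, orbitPerm_orbitCons_self, orbitPerm_symm_orbitCons_self]
      ring
    · rw [orbitPerm_orbitCons_of_ne w (Ne.symm hj), orbitPerm_symm_orbitCons_of_ne w (Ne.symm hj)]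
      ring
  simp only [h, Finset.sum_add_distrib, Finset.sum_ite_eq', Finset.mem_univ, if_true,
    Finset.sum_const, Finset.card_univ, Fintype.card_fin, nsmul_eq_mul]
  ring

lemma norm_adjOp_le : ‖adjOp w‖ ≤ 2 * p := by
  refine (norm_sum_le _ _).trans ?_
  refine (Finset.sum_le_sum fun i _ => (norm_add_le _ _).trans
    (add_le_add (norm_restrictOp_le _ _) (norm_restrictOp_le _ _))).trans_eq ?_
  rw [Finset.sum_const, Finset.card_univ, Fintype.card_fin, nsmul_eq_mul]
  ring

lemma isSelfAdjoint_adjOp : IsSelfAdjoint (adjOp w) := by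
  rw [ContinuousLinearMap.isSelfAdjoint_iff_isSymmetric]
  intro f g
  simp only [adjOp, ContinuousLinearMap.coe_coe, sum_apply, add_apply,
    sum_inner, inner_sum, inner_add_left, inner_add_right, inner_restrictOp_perm]
  exact Finset.sum_congr rfl fun i _ => add_comm _ _

lemma eq_adjOp (T : lp (fun _ : StarOrbit p w => ℂ) 2 →L[ℂ] lp (fun _ : StarOrbit p w => ℂ) 2)
    (hT : ∀ (f : lp (fun _ : StarOrbit p w => ℂ) 2) (u : StarOrbit p w),
      T f u = ∑ i : Fin p,
        ((∑' v : StarOrbit p w,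
            if Ebd p i.succ (u : ℕ → Fin (p + 1)) = (v : ℕ → Fin (p + 1)) then f v else 0) +
         (∑' v : StarOrbit p w,
            if Ebd p i.succ (v : ℕ → Fin (p + 1)) = (u : ℕ → Fin (p + 1)) then f v else 0))) :
    T = adjOp w := by
  ext f u
  rw [hT, adjOp_apply]
  refine Finset.sum_congr rfl fun i _ => congrArg₂ _ ?_ ?_
  · simp only [← coe_orbitPerm, Subtype.coe_inj]
    rw [tsum_eq_single (orbitPerm w i u) fun v hv => if_neg (Ne.symm hv), if_pos rfl]
  · simp only [← coe_orbitPerm, Subtype.coe_inj, ← Equiv.eq_symm_apply]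
    rw [tsum_eq_single ((orbitPerm w i).symm u) fun v hv => if_neg hv, if_pos rfl]

end Orbit

section Spectrum

variable {p : ℕ}

lemma mem_spectrum_adjOp_iff (w : ℕ → Fin (p + 1)) {lam : ℂ} (hlam : lam ≠ 2 * ((p : ℂ) - 1)) :
    lam ∈ spectrum ℂ (adjOp w) ↔
      lam ^ 2 - 2 * ((p : ℂ) - 1) * lam - 2 * p ∈ spectrum ℂ (adjOp (tailWord w)) := by
  have hinj := orbitCons_injective w 0
  have hzero : ∀ (g : lp (fun _ : StarOrbit p (tailWord w) => ℂ) 2) (i : Fin p)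
      (u : StarOrbit p (tailWord w)),
      extendOp (orbitCons w 0) hinj g (orbitCons w i.succ u) = 0 := fun g i u => by
    refine extendOp_apply_of_notMem_range _ _ _ ?_
    rintro ⟨v, hv⟩
    exact i.succ_ne_zero ((orbitCons_inj w).1 hv).1.symm
  refine mem_spectrum_iff_of_compression (restrictOp (orbitCons w 0) hinj)
    (extendOp (orbitCons w 0) hinj) (adjOp w) (adjOp (tailWord w)) _ _ ?_ ?_ ?_ ?_ hlam
  · intro g
    ext u
    rw [restrictOp_apply, extendOp_apply]
  · intro g
    ext u
    rw [restrictOp_apply, adjOp_apply_orbitCons_zero]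
    simp [hzero]
  · intro f hf
    have hf0 : ∀ u, f (orbitCons w 0 u) = 0 := fun u => by
      rw [← restrictOp_apply (orbitCons w 0) hinj, hf]
      rfl
    ext v
    obtain ⟨j, u, rfl⟩ := exists_orbitCons w v
    rw [lp.coeFn_add, lp.coeFn_smul, Pi.add_apply, Pi.smul_apply]
    cases j using Fin.cases with
    | zero => rw [extendOp_apply, restrictOp_apply, hf0, smul_zero, zero_add]
    | succ i =>
      rw [hzero, adjOp_apply_orbitCons_succ, hf0, hf0, smul_eq_mul]
      ring
  · intro g
    ext u
    rw [lp.coeFn_add, lp.coeFn_smul, Pi.add_apply, Pi.smul_apply, restrictOp_apply,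
      adjOp_apply_orbitCons_zero, adjOp_apply]
    simp only [adjOp_apply_orbitCons_succ, hzero, extendOp_apply, Equiv.symm_apply_apply,
      mul_zero, add_zero]
    have h : ∀ i : Fin p, g (orbitPerm (tailWord w) i u) + g u +
        (g u + g ((orbitPerm (tailWord w) i).symm u)) = g (orbitPerm (tailWord w) i u) +
          g ((orbitPerm (tailWord w) i).symm u) + 2 * g u := fun i => by ring
    simp only [h, Finset.sum_add_distrib, Finset.sum_const, Finset.card_univ, Fintype.card_fin,
      nsmul_eq_mul, smul_eq_mul]
    ring

lemma exists_orbitPerm_two_cycle (hp : 2 ≤ p) (w : ℕ → Fin (p + 1)) :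
    ∃ (i : Fin p) (a b : StarOrbit p w),
      a ≠ b ∧ orbitPerm w i a = b ∧ orbitPerm w i b = a := by
  let i : Fin p := ⟨0, by omega⟩
  let j : Fin p := ⟨1, by omega⟩
  have hji : j ≠ i := by simp [i, j]
  let v : StarOrbit p (tailWord w) := orbitCons (tailWord w) j.succ ⟨_, .refl⟩
  refine ⟨i, orbitCons w 0 v, orbitCons w i.succ v, fun h => ?_, ?_, ?_⟩
  · exact i.succ_ne_zero ((orbitCons_inj w).1 h).1.symm
  · rw [orbitPerm_orbitCons_zero, orbitPerm_orbitCons_of_ne _ hji]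
  · rw [orbitPerm_orbitCons_self]

lemma two_mul_sub_one_mem_spectrum_adjOp (hp : 2 ≤ p) (w : ℕ → Fin (p + 1)) :
    2 * ((p : ℂ) - 1) ∈ spectrum ℂ (adjOp w) := by
  obtain ⟨i, a, b, hab, hiab, hiba⟩ := exists_orbitPerm_two_cycle hp (tailWord w)
  have hinj := orbitCons_injective w i.succ
  let g : lp (fun _ : StarOrbit p (tailWord w) => ℂ) 2 := lp.single 2 a 1 - lp.single 2 b 1
  let f := extendOp (orbitCons w i.succ) hinj g
  have hne : ∀ j ≠ i.succ, ∀ u, f (orbitCons w j u) = 0 := fun j hj u => by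
    refine extendOp_apply_of_notMem_range _ _ _ ?_
    rintro ⟨v, hv⟩
    exact hj ((orbitCons_inj w).1 hv).1.symm
  have hg : ∀ u, g u = (if u = a then 1 else 0) - if u = b then 1 else 0 := fun u => by
    simp only [g, lp.coeFn_sub, Pi.sub_apply, lp.coeFn_single, Pi.single_apply]
  have hgi : ∀ u, g (orbitPerm (tailWord w) i u) = -g u := fun u => by
    have ha : orbitPerm (tailWord w) i u = a ↔ u = b := by
      rw [← hiba, EmbeddingLike.apply_eq_iff_eq]
    have hb : orbitPerm (tailWord w) i u = b ↔ u = a := by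
      rw [← hiab, EmbeddingLike.apply_eq_iff_eq]
    simp only [hg, ha, hb, neg_sub]
  have hTf : adjOp w f = (2 * ((p : ℂ) - 1)) • f := by
    ext v
    obtain ⟨j, u, rfl⟩ := exists_orbitCons w v
    rw [lp.coeFn_smul, Pi.smul_apply, smul_eq_mul]
    cases j using Fin.cases with
    | zero =>
      rw [adjOp_apply_orbitCons_zero, hne 0 i.succ_ne_zero.symm, mul_zero]
      refine Finset.sum_eq_zero fun j _ => ?_
      by_cases hj : j = i
      · rw [hj, extendOp_apply, extendOp_apply, hgi, neg_add_cancel]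
      · have hj' : j.succ ≠ i.succ := fun h => hj (Fin.succ_injective _ h)
        rw [hne _ hj', hne _ hj', add_zero]
    | succ j =>
      rw [adjOp_apply_orbitCons_succ, hne 0 i.succ_ne_zero.symm, hne 0 i.succ_ne_zero.symm,
        add_zero, zero_add]
  by_contra hmem
  obtain ⟨R, -, hR⟩ := (notMem_spectrum_iff_exists_inverse _ _).1 hmem
  have hf : f = 0 := by
    rw [← hR f, hTf, map_smul, sub_self]
  have hfa : f (orbitCons w i.succ a) = 1 := by
    rw [extendOp_apply, hg, if_pos rfl, if_neg hab, sub_zero]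
  rw [hf] at hfa
  exact zero_ne_one hfa

lemma ofReal_mem_spectrum_adjOp_iff (w : ℕ → Fin (p + 1)) {x : ℝ} (hx : x ≠ 2 * ((p : ℝ) - 1)) :
    (x : ℂ) ∈ spectrum ℂ (adjOp w) ↔ (fp p x : ℂ) ∈ spectrum ℂ (adjOp (tailWord w)) := by
  rw [mem_spectrum_adjOp_iff w (by exact_mod_cast hx)]
  simp [fp]

lemma abs_le_of_mem_spectrum_adjOp (w : ℕ → Fin (p + 1)) {x : ℝ}
    (hx : (x : ℂ) ∈ spectrum ℂ (adjOp w)) : |x| ≤ 2 * p := by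
  have h := spectrum.norm_le_norm_mul_of_mem hx
  rw [Complex.norm_real, Real.norm_eq_abs] at h
  refine h.trans ?_
  refine (mul_le_of_le_one_right (norm_nonneg _) ContinuousLinearMap.norm_id_le).trans ?_
  exact norm_adjOp_le w

lemma ofReal_mem_spectrum_adjOp_of_iterate (hp : 2 ≤ p) (n : ℕ) (w : ℕ → Fin (p + 1)) {x : ℝ}
    (hx : (fp p)^[n] x = 2 * ((p : ℝ) - 1)) : (x : ℂ) ∈ spectrum ℂ (adjOp w) := by
  by_cases hc : x = 2 * ((p : ℝ) - 1)
  · rw [hc]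
    exact_mod_cast two_mul_sub_one_mem_spectrum_adjOp hp w
  induction n generalizing w x with
  | zero => exact absurd hx hc
  | succ n ih =>
    rw [ofReal_mem_spectrum_adjOp_iff w hc]
    by_cases hc' : fp p x = 2 * ((p : ℝ) - 1)
    · rw [hc']
      exact_mod_cast two_mul_sub_one_mem_spectrum_adjOp hp _
    · exact ih _ hx hc'

lemma iterate_of_mem_spectrum_adjOp (w : ℕ → Fin (p + 1)) {x : ℝ}
    (hx : (x : ℂ) ∈ spectrum ℂ (adjOp w))
    (hne : ∀ n, (fp p)^[n] x ≠ 2 * ((p : ℝ) - 1)) (n : ℕ) : |(fp p)^[n] x| ≤ 2 * p := by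
  induction n generalizing w x with
  | zero => exact abs_le_of_mem_spectrum_adjOp w hx
  | succ n ih =>
    exact ih (tailWord w) ((ofReal_mem_spectrum_adjOp_iff w (hne 0)).1 hx) fun n => hne (n + 1)

end Spectrum

section Dynamics

variable {p : ℕ}

/-- The inverse branches of `fp p` on `[-2p, 2p]` contract distances by a factor of two. -/
lemma exists_fp_eq_abs_sub_le (hp : 2 ≤ p) {x z : ℝ} (hx : |fp p x| ≤ 2 * p)
    (hz : |z| ≤ 2 * p) : ∃ y, fp p y = z ∧ |y| ≤ 2 * p ∧ |x - y| ≤ |fp p x - z| / 2 := by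
  have hp' : (2 : ℝ) ≤ p := by exact_mod_cast hp
  rw [abs_le] at hx hz
  have hsq : fp p x = (x - (p - 1)) ^ 2 - (p ^ 2 + 1) := by
    unfold fp
    ring
  have hnonneg : 0 ≤ z + (p ^ 2 + 1) := by nlinarith
  have hs2 := Real.sq_sqrt hnonneg
  set s := √(z + (p ^ 2 + 1)) with hs
  have hs1 : 1 ≤ s := by
    rw [hs, Real.one_le_sqrt]
    nlinarith
  obtain ⟨e, he2, hex⟩ : ∃ e : ℝ, e ^ 2 = 1 ∧ 1 ≤ e * (x - (p - 1)) := by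
    have habs : 1 ≤ |x - (p - 1)| := by
      rw [← one_le_sq_iff_one_le_abs]
      nlinarith
    rcases le_abs.1 habs with h | h
    · exact ⟨1, by norm_num, by linarith⟩
    · exact ⟨-1, by norm_num, by linarith⟩
  have hfy : fp p (p - 1 + e * s) = z := by
    unfold fp
    linear_combination s ^ 2 * he2 + hs2
  have he : |e| = 1 := by
    rwa [← pow_eq_one_iff_of_nonneg (abs_nonneg e) two_ne_zero, sq_abs]
  have hes : |e * s| ≤ p + 1 := by
    rw [abs_mul, he, one_mul, abs_of_nonneg (Real.sqrt_nonneg _), Real.sqrt_le_iff]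
    constructor <;> nlinarith
  refine ⟨p - 1 + e * s, hfy, ?_, ?_⟩
  · rw [abs_le] at hes ⊢
    constructor <;> linarith
  have hfac : fp p x - z = (e * (x - (p - 1)) + s) * (e * (x - (p - 1 + e * s))) := by
    rw [← hfy]
    unfold fp
    linear_combination (e * (x - (p - 1)) * s - (x - (p - 1)) ^ 2) * he2
  rw [hfac, abs_mul, abs_mul, he, one_mul, le_div_iff₀ two_pos, mul_comm]
  refine mul_le_mul_of_nonneg_right ?_ (abs_nonneg _)
  exact (by linarith : (2 : ℝ) ≤ e * (x - (p - 1)) + s).trans (le_abs_self _)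

lemma exists_iterate_fp_eq (hp : 2 ≤ p) (n : ℕ) {x : ℝ}
    (hx : ∀ k, |(fp p)^[k] x| ≤ 2 * p) :
    ∃ y, (fp p)^[n] y = 2 * ((p : ℝ) - 1) ∧ |y| ≤ 2 * p ∧ |x - y| ≤ 4 * p * (1 / 2) ^ n := by
  induction n generalizing x with
  | zero =>
    have hp' : (2 : ℝ) ≤ p := by exact_mod_cast hp
    have hc : |2 * ((p : ℝ) - 1)| ≤ 2 * p := by
      rw [abs_le]
      constructor <;> linarith
    refine ⟨_, rfl, hc, ?_⟩
    have hx0 : |x| ≤ 2 * p := hx 0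
    have := abs_sub x (2 * ((p : ℝ) - 1))
    linarith
  | succ n ih =>
    obtain ⟨z, hzn, hz, hxz⟩ := ih (x := fp p x) fun k => hx (k + 1)
    obtain ⟨y, rfl, hy, hxy⟩ := exists_fp_eq_abs_sub_le hp (hx 1) hz
    refine ⟨y, hzn, hy, hxy.trans ?_⟩
    rw [pow_succ]
    linarith

lemma mem_closure_of_iterate_bounded (hp : 2 ≤ p) {x : ℝ}
    (hx : ∀ k, |(fp p)^[k] x| ≤ 2 * p) :
    x ∈ closure (⋃ n : ℕ, {lam : ℝ | (fp p)^[n] lam = 2 * ((p : ℝ) - 1)}) := by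
  rw [Metric.mem_closure_iff]
  intro ε hε
  have hlim : Filter.Tendsto (fun n : ℕ => 4 * (p : ℝ) * (1 / 2) ^ n) Filter.atTop (nhds 0) := by
    rw [← mul_zero (4 * (p : ℝ))]
    exact (tendsto_pow_atTop_nhds_zero_of_lt_one (by norm_num) (by norm_num)).const_mul _
  obtain ⟨n, hn⟩ := (hlim.eventually_lt_const hε).exists
  obtain ⟨y, hy, -, hxy⟩ := exists_iterate_fp_eq hp n hx
  exact ⟨y, Set.mem_iUnion.2 ⟨n, hy⟩, hxy.trans_lt hn⟩

end Dynamics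

/-- Let `p ≥ 2`, `w ∈ X^ℕ` and let `T` be the adjacency operator of the orbital Schreier
graph `Γ_w` on `H = ℓ²(Orb(w); ℂ)`, `(Tf)(u) = Σ_{i=1}^p (f(E_i(u)) + f(E_i^{-1}(u)))`
(the two summands being encoded as sums over the orbit of the indicator of `E_i(u) = v`,
resp. `E_i(v) = u`). Then `T` is self-adjoint and its spectrum, as a subset of `ℝ`, is the
closure of `⋃_{n ≥ 0} {λ : f_p^{∘n}(λ) = 2(p−1)}`. -/
theorem stmt12 (p : ℕ) (hp : 2 ≤ p) (w : ℕ → Fin (p + 1))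
    (T : lp (fun _ : StarOrbit p w => ℂ) 2 →L[ℂ] lp (fun _ : StarOrbit p w => ℂ) 2)
    (hT : ∀ (f : lp (fun _ : StarOrbit p w => ℂ) 2) (u : StarOrbit p w),
      T f u = ∑ i : Fin p,
        ((∑' v : StarOrbit p w,
            if Ebd p i.succ (u : ℕ → Fin (p + 1)) = (v : ℕ → Fin (p + 1)) then f v else 0) +
         (∑' v : StarOrbit p w,
            if Ebd p i.succ (v : ℕ → Fin (p + 1)) = (u : ℕ → Fin (p + 1)) then f v else 0))) :
    IsSelfAdjoint T ∧
      {x : ℝ | (x : ℂ) ∈ spectrum ℂ T} =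
        closure (⋃ n : ℕ, {lam : ℝ | (fp p)^[n] lam = 2 * ((p : ℝ) - 1)}) := by
  obtain rfl := eq_adjOp w T hT
  refine ⟨isSelfAdjoint_adjOp w, subset_antisymm ?_ (closure_minimal ?_ ?_)⟩
  · intro x hx
    by_cases hne : ∀ n, (fp p)^[n] x ≠ 2 * ((p : ℝ) - 1)
    · exact mem_closure_of_iterate_bounded hp (iterate_of_mem_spectrum_adjOp w hx hne)
    · push Not at hne
      exact subset_closure (Set.mem_iUnion.2 hne)
  · exact Set.iUnion_subset fun n x hx => ofReal_mem_spectrum_adjOp_of_iterate hp n w hx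
  · exact (spectrum.isClosed _).preimage Complex.continuous_ofReal
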